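/- Let (Ω,Σ,μ) be a finite measure space and X a real Banach space such that the closed unit ball B_{X*} of X* equipped with the weak* topology is convex block compact. If ν : Σ → X** is a countably additive μ-continuous vector measure such that for every A ∈ Σ with μ(A) > 0 the w*-closed convex hull in X** of the average range 𝒜_ν(A) intersects X (viewed as a subspace of X** via the canonical embedding), then ν(A) ∈ X for every A ∈ Σ. -/

import Mathlib

open MeasureTheory Filter Set Topology
open scoped UniformConvergence

noncomputable section

/-- The topology `σ(Z,X)` on `Z` of pointwise convergence on a subspace `X ⊆ Z*`. -/
def sigmaTop {Z : Type*} [NormedAddCommGroup Z] [NormedSpace ℝ Z]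
    (X : Submodule ℝ (Z →L[ℝ] ℝ)) : TopologicalSpace Z :=
  TopologicalSpace.induced (fun z => fun x : X => (x : Z →L[ℝ] ℝ) z) Pi.topologicalSpace

/-- The weak* topology on the dual of `E`: pointwise convergence on `E`. -/
def wstarTop (E : Type*) [NormedAddCommGroup E] [NormedSpace ℝ E] :
    TopologicalSpace (E →L[ℝ] ℝ) :=
  TopologicalSpace.induced (fun f => (f : E → ℝ)) Pi.topologicalSpace

/-- A norm-closed subspace `X ⊆ Z*` is norming for `Z` if
`|||z||| = sup {⟨x,z⟩ : x ∈ B_X}` is an equivalent norm on `Z`; since this sup is always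
`≤ ‖z‖`, this amounts to the existence of `c > 0` with `c⬝‖z‖ ≤ |||z|||` for all `z`. -/
def IsNorming {Z : Type*} [NormedAddCommGroup Z] [NormedSpace ℝ Z]
    (X : Submodule ℝ (Z →L[ℝ] ℝ)) : Prop :=
  ∃ c > (0 : ℝ), ∀ z : Z, c * ‖z‖ ≤ sSup {r : ℝ | ∃ x ∈ X, ‖x‖ ≤ 1 ∧ r = x z}

/-- The average range `𝒜_ν(A) = {ν(B)/μ(B) : B ∈ Σ, B ⊆ A, μ(B) > 0}`. -/
def avgRange {Ω : Type*} [MeasurableSpace Ω] {Z : Type*} [NormedAddCommGroup Z]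
    [NormedSpace ℝ Z] (μ : Measure Ω) (ν : VectorMeasure Ω (Z →L[ℝ] ℝ)) (A : Set Ω) :
    Set (Z →L[ℝ] ℝ) :=
  {w | ∃ B : Set Ω, MeasurableSet B ∧ B ⊆ A ∧ 0 < μ B ∧ w = (μ B).toReal⁻¹ • ν B}

/-- Condition (G): for every `A ∈ Σ` with `μ(A) > 0`, the `w*`-closed convex hull of the
average range `𝒜_ν(A)` intersects `X`. -/
def CondG {Ω : Type*} [MeasurableSpace Ω] {Z : Type*} [NormedAddCommGroup Z]
    [NormedSpace ℝ Z] (μ : Measure Ω) (ν : VectorMeasure Ω (Z →L[ℝ] ℝ))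
    (X : Submodule ℝ (Z →L[ℝ] ℝ)) : Prop :=
  ∀ A : Set Ω, MeasurableSet A → 0 < μ A →
    (@closure _ (wstarTop Z) (convexHull ℝ (avgRange μ ν A)) ∩
      (X : Set (Z →L[ℝ] ℝ))).Nonempty

/-- `h` is a convex block subsequence of `g`: `h k = ∑_{n ∈ I k} a n • g n` where the finite
sets `I k` satisfy `max (I k) < min (I (k+1))` and the `a n` are non-negative reals summing
to `1` over each `I k`. -/
def ConvexBlock {E : Type*} [AddCommMonoid E] [Module ℝ E] (g h : ℕ → E) : Prop :=
  ∃ (I : ℕ → Finset ℕ) (a : ℕ → ℝ),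
    (∀ k, ∀ n ∈ I k, ∀ m ∈ I (k + 1), n < m) ∧
    (∀ n, 0 ≤ a n) ∧ (∀ k, ∑ n ∈ I k, a n = 1) ∧
    (∀ k, h k = ∑ n ∈ I k, a n • g n)

/-- `(B_{X*}, w*)` is convex block compact: every sequence in the closed unit ball of `X*`
admits a convex block subsequence which is `w*`-convergent. -/
def DualBallConvexBlockCompact (X : Type*) [NormedAddCommGroup X] [NormedSpace ℝ X] : Prop :=
  ∀ g : ℕ → (X →L[ℝ] ℝ), (∀ n, ‖g n‖ ≤ 1) →
    ∃ h : ℕ → (X →L[ℝ] ℝ), ConvexBlock g h ∧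
      ∃ f : X →L[ℝ] ℝ, Tendsto h atTop (@nhds _ (wstarTop X) f)

/-
Suppose `R ⊆ Z*` is a closed subspace and `ν A ∉ R`. Choose `F ∈ Z**` of norm at most `1` that
vanishes on `R` with `F (ν A) > 0`, and let `h ∈ L¹(μ)` be the density of `F ∘ ν`. Forming
densities is a weak*-to-weak continuous operator `Z** → L¹(μ)`, so the theorems of Goldstine and
Mazur give, for any `w ∈ R`, vectors `g n ∈ B_Z` whose densities `d(ν(·) (g n))/dμ` converge to `h`
in norm and with `w (g n) → F w = 0`. Both limits survive the passage to convex blocks, so we may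
assume that `g n → f` in `σ(Z, R)`; then `w f = 0`. Condition (G), applied on a set where the
densities of the `g n` exceed that of `f` by a fixed gap, contradicts this convergence; hence
`h ≤ d(ν(·) f)/dμ` almost everywhere. If `h > c > 0` on a set `B` of positive measure, let `w` be
the element of `R` that (G) provides for `B`: the lower bound `c` on the density of `f` passes to
the weak*-closed convex hull of the average range, so `w f ≥ c`, a contradiction. Therefore
`h ≤ 0`, against `∫_A h dμ = F (ν A) > 0`. The theorem is the case `Z = X*`, `R = X`.
-/

open scoped ENNReal

section LinftyDuality

variable {Ω : Type*} [MeasurableSpace Ω] {μ : Measure Ω}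

lemma exists_simpleFunc_abs_sub_le {φ : Ω → ℝ} (hφ : Measurable φ) {C δ : ℝ}
    (hC : ∀ ω, |φ ω| ≤ C) (hδ : 0 < δ) : ∃ s : SimpleFunc Ω ℝ, ∀ ω, |φ ω - s ω| ≤ δ := by
  have floor_measurable : Measurable fun ω => ⌊φ ω / δ⌋ := (hφ.div_const δ).floor
  let s : SimpleFunc Ω ℤ :=
    { toFun := fun ω => ⌊φ ω / δ⌋
      measurableSet_fiber' := fun j => floor_measurable (measurableSet_singleton j)
      finite_range' := by
        refine (Set.finite_Icc ⌊-C / δ⌋ ⌊C / δ⌋).subset ?_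
        rintro _ ⟨ω, rfl⟩
        obtain ⟨hlower, hupper⟩ := abs_le.1 (hC ω)
        exact ⟨Int.floor_le_floor (by gcongr), Int.floor_le_floor (by gcongr)⟩ }
  refine ⟨s.map fun j : ℤ => δ * j, fun ω => ?_⟩
  calc |φ ω - δ * ⌊φ ω / δ⌋| = δ * Int.fract (φ ω / δ) := by
        rw [← Int.self_sub_floor, mul_sub, mul_div_cancel₀ _ hδ.ne', abs_of_nonneg]
        rw [sub_nonneg, ← le_div_iff₀' hδ]
        exact Int.floor_le _
    _ ≤ δ := mul_le_of_le_one_right hδ.le (Int.fract_lt_one _).le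

lemma ae_norm_le_linfty_norm (φ : Lp ℝ ∞ μ) : ∀ᵐ ω ∂μ, ‖φ ω‖ ≤ ‖φ‖ := by
  filter_upwards [ae_le_eLpNormEssSup (f := φ)] with ω hω
  rw [← eLpNorm_exponent_top] at hω
  rw [Lp.norm_def, ← toReal_enorm]
  exact ENNReal.toReal_mono (Lp.eLpNorm_ne_top φ) hω

lemma exists_measurable_bounded_ae_eq (φ : Lp ℝ ∞ μ) :
    ∃ φ' : Ω → ℝ, Measurable φ' ∧ (∀ ω, |φ' ω| ≤ ‖φ‖) ∧ φ =ᵐ[μ] φ' := by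
  refine ⟨fun ω => max (-‖φ‖) (min ‖φ‖ (φ ω)),
    measurable_const.max (measurable_const.min (Lp.stronglyMeasurable φ).measurable),
    fun ω => abs_le.2 ⟨le_max_left _ _, max_le (by linarith [norm_nonneg φ]) (min_le_left _ _)⟩, ?_⟩
  filter_upwards [ae_norm_le_linfty_norm φ] with ω hω
  obtain ⟨hlower, hupper⟩ := abs_le.1 hω
  rw [min_eq_right hupper, max_eq_right hlower]

lemma smul_indicatorConstLp_one {p : ℝ≥0∞} {A : Set Ω} (hA : MeasurableSet A) (hμA : μ A ≠ ∞)
    (c : ℝ) : c • indicatorConstLp p hA hμA (1 : ℝ) = indicatorConstLp p hA hμA c := by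
  refine (MemLp.toLp_const_smul c _).symm.trans (MemLp.toLp_congr _ _ (.of_forall fun ω => ?_))
  by_cases hω : ω ∈ A <;> simp [hω]

/-- The duality pairing `⟨φ, g⟩ = ∫ φ g dμ` between `L^∞(μ)` and `L¹(μ)`. -/
def linftyPairing (μ : Measure Ω) : Lp ℝ ∞ μ →L[ℝ] StrongDual ℝ (Lp ℝ 1 μ) :=
  (ContinuousLinearMap.mul ℝ ℝ).lpPairing μ ∞ 1

lemma linftyPairing_apply (φ : Lp ℝ ∞ μ) (g : Lp ℝ 1 μ) :
    linftyPairing μ φ g = ∫ ω, φ ω * g ω ∂μ :=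
  ContinuousLinearMap.lpPairing_eq_integral _ φ g

variable [IsFiniteMeasure μ]

lemma simpleFunc_toLp_mem {W : Submodule ℝ (Lp ℝ ∞ μ)}
    (hind : ∀ A (hA : MeasurableSet A), indicatorConstLp ∞ hA (measure_ne_top μ A) (1 : ℝ) ∈ W)
    (s : SimpleFunc Ω ℝ) : (s.memLp_of_isFiniteMeasure ∞ μ).toLp s ∈ W := by
  induction s using SimpleFunc.induction with
  | @const c A hA =>
    convert W.smul_mem c (hind A hA) using 1
    rw [smul_indicatorConstLp_one]
    refine MemLp.toLp_congr _ _ (.of_forall fun ω => ?_)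
    by_cases hω : ω ∈ A <;> simp [hω]
  | add _ hs ht => exact W.add_mem hs ht

lemma linfty_submodule_eq_top {W : Submodule ℝ (Lp ℝ ∞ μ)} (hW : IsClosed (W : Set (Lp ℝ ∞ μ)))
    (hind : ∀ A (hA : MeasurableSet A), indicatorConstLp ∞ hA (measure_ne_top μ A) (1 : ℝ) ∈ W) :
    W = ⊤ := by
  refine (Submodule.eq_top_iff'.2 fun φ => hW.closure_subset (Metric.mem_closure_iff.2 ?_))
  intro ε hε
  obtain ⟨φ', hmeas, hbound, heq⟩ := exists_measurable_bounded_ae_eq φ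
  obtain ⟨s, hs⟩ := exists_simpleFunc_abs_sub_le hmeas hbound (half_pos hε)
  refine ⟨_, simpleFunc_toLp_mem hind s, ?_⟩
  have hdist : ∀ᵐ ω ∂μ, ‖(φ - (s.memLp_of_isFiniteMeasure ∞ μ).toLp s) ω‖ ≤ ε / 2 := by
    filter_upwards [Lp.coeFn_sub φ ((s.memLp_of_isFiniteMeasure ∞ μ).toLp s), heq,
      (s.memLp_of_isFiniteMeasure ∞ μ).coeFn_toLp] with ω hsub hφ hsω
    rw [hsub, Pi.sub_apply, hφ, hsω]
    exact hs ω
  rw [dist_eq_norm]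
  calc _ ≤ ε / 2 := by simpa using Lp.norm_le_of_ae_bound (half_pos hε).le hdist
    _ < ε := half_lt_self hε

lemma linftyPairing_indicatorConstLp {A : Set Ω} (hA : MeasurableSet A) (g : Lp ℝ 1 μ) :
    linftyPairing μ (indicatorConstLp ∞ hA (measure_ne_top μ A) 1) g = ∫ ω in A, g ω ∂μ := by
  rw [linftyPairing_apply, ← integral_indicator hA]
  refine integral_congr_ae ?_
  filter_upwards [indicatorConstLp_coeFn (p := ∞) (hs := hA) (hμs := measure_ne_top μ A)
    (c := (1 : ℝ))] with ω hω
  simp only [hω, ← Set.indicator_mul_left, one_mul]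

lemma linftyPairing_apply_indicatorConstLp {A : Set Ω} (hA : MeasurableSet A) (φ : Lp ℝ ∞ μ) :
    linftyPairing μ φ (indicatorConstLp 1 hA (measure_ne_top μ A) 1) = ∫ ω in A, φ ω ∂μ := by
  rw [linftyPairing_apply, ← integral_indicator hA]
  refine integral_congr_ae ?_
  filter_upwards [indicatorConstLp_coeFn (p := 1) (hs := hA) (hμs := measure_ne_top μ A)
    (c := (1 : ℝ))] with ω hω
  simp only [hω, ← Set.indicator_mul_right, mul_one]

lemma l1_dual_ext {ψ₁ ψ₂ : StrongDual ℝ (Lp ℝ 1 μ)}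
    (h : ∀ A (hA : MeasurableSet A), ψ₁ (indicatorConstLp 1 hA (measure_ne_top μ A) 1) =
      ψ₂ (indicatorConstLp 1 hA (measure_ne_top μ A) 1)) : ψ₁ = ψ₂ := by
  ext g
  induction g using Lp.induction ENNReal.one_ne_top with
  | @indicatorConst c A hA hμA =>
    rw [Lp.simpleFunc.coe_indicatorConst, ← smul_indicatorConstLp_one, map_smul, map_smul, h A hA]
  | add hf hg _ hψf hψg => rw [map_add, map_add, hψf, hψg]
  | isClosed => exact isClosed_eq ψ₁.continuous ψ₂.continuous

lemma exists_l2_representative (ψ : StrongDual ℝ (Lp ℝ 1 μ)) :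
    ∃ φ : Lp ℝ 2 μ, ∀ A (hA : MeasurableSet A),
      ∫ ω in A, φ ω ∂μ = ψ (indicatorConstLp 1 hA (measure_ne_top μ A) 1) := by
  let inclusion : Lp ℝ 2 μ →L[ℝ] Lp ℝ 1 μ :=
    (ContinuousLinearMap.mul ℝ ℝ).holderL μ 2 2 1 (Lp.const 2 μ 1)
  refine ⟨(InnerProductSpace.toDual ℝ _).symm (ψ ∘L inclusion), fun A hA => ?_⟩
  rw [← L2.inner_indicatorConstLp_one (𝕜 := ℝ) hA (measure_ne_top μ A), real_inner_comm,
    InnerProductSpace.toDual_symm_apply, ContinuousLinearMap.comp_apply]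
  congr 1
  refine Lp.ext ?_
  filter_upwards [ContinuousLinearMap.coeFn_holder (r := 1) (ContinuousLinearMap.mul ℝ ℝ)
      (Lp.const 2 μ (1 : ℝ)) (indicatorConstLp 2 hA (measure_ne_top μ A) 1),
    Lp.coeFn_const 2 μ (1 : ℝ),
    indicatorConstLp_coeFn (p := 2) (hs := hA) (hμs := measure_ne_top μ A) (c := (1 : ℝ)),
    indicatorConstLp_coeFn (p := 1) (hs := hA) (hμs := measure_ne_top μ A) (c := (1 : ℝ))]
    with ω hprod hconst hind₂ hind₁
  rw [ContinuousLinearMap.holderL_apply_apply, hprod, hconst, hind₂, hind₁]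
  simp

lemma linftyPairing_surjective : Function.Surjective (linftyPairing μ) := by
  intro ψ
  obtain ⟨φ, hφ⟩ := exists_l2_representative ψ
  have hint : Integrable φ μ := (Lp.memLp φ).integrable one_le_two
  have hval : ∀ A, MeasurableSet A → |∫ ω in A, φ ω ∂μ| ≤ μ.real A * ‖ψ‖ := fun A hA => by
    rw [hφ A hA, mul_comm]
    simpa [norm_indicatorConstLp] using
      ψ.le_opNorm (indicatorConstLp 1 hA (measure_ne_top μ A) 1)
  have hupper : φ ≤ᵐ[μ] fun _ => ‖ψ‖ :=
    ae_le_of_forall_setIntegral_le hint (integrable_const _) fun A hA _ => by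
      simpa using (abs_le.1 (hval A hA)).2
  have hlower : (fun _ => -‖ψ‖) ≤ᵐ[μ] φ :=
    ae_le_of_forall_setIntegral_le (integrable_const _) hint fun A hA _ => by
      simpa using (abs_le.1 (hval A hA)).1
  have hbdd : MemLp φ ∞ μ := memLp_top_of_bound hint.aestronglyMeasurable ‖ψ‖ <| by
    filter_upwards [hupper, hlower] with ω hu hl using abs_le.2 ⟨hl, hu⟩
  refine ⟨hbdd.toLp φ, l1_dual_ext fun A hA => ?_⟩
  rw [linftyPairing_apply_indicatorConstLp, ← hφ A hA]
  exact integral_congr_ae (ae_restrict_of_ae hbdd.coeFn_toLp)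

end LinftyDuality

section WeakStarToWeak

variable {V Y : Type*} [NormedAddCommGroup V] [NormedSpace ℝ V]
  [NormedAddCommGroup Y] [NormedSpace ℝ Y]

/-- Weak*-to-weak continuity of an operator `P : V* → Y`, expressed by its adjoint: every
functional on `Y` pulls back along `P` to the evaluation at a point of `V`. -/
def IsWeakStarToWeak (P : StrongDual ℝ V →L[ℝ] Y) : Prop :=
  ∀ ψ : StrongDual ℝ Y, ∃ v : V, ∀ F : StrongDual ℝ V, ψ (P F) = F v

namespace IsWeakStarToWeak

lemma prod_eval {P : StrongDual ℝ V →L[ℝ] Y} (hP : IsWeakStarToWeak P) (w : V) :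
    IsWeakStarToWeak (P.prod (NormedSpace.inclusionInDoubleDual ℝ V w)) := by
  intro ψ
  obtain ⟨v, hv⟩ := hP (ψ ∘L .inl ℝ Y ℝ)
  refine ⟨v + ψ (0, 1) • w, fun F => ?_⟩
  calc ψ (P F, F w) = ψ (P F, 0) + F w * ψ (0, 1) := by
        rw [← smul_eq_mul, ← map_smul, ← map_add]
        simp
    _ = F (v + ψ (0, 1) • w) := by
        rw [map_add, map_smul, smul_eq_mul, mul_comm, ← hv F]
        rfl

lemma mem_closure_image_closedBall {P : StrongDual ℝ (StrongDual ℝ V) →L[ℝ] Y}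
    (hP : IsWeakStarToWeak P) {F : StrongDual ℝ (StrongDual ℝ V)} (hF : ‖F‖ ≤ 1) :
    P F ∈ closure ((P ∘L NormedSpace.inclusionInDoubleDual ℝ V) '' Metric.closedBall 0 1) := by
  set T := P ∘L NormedSpace.inclusionInDoubleDual ℝ V
  by_contra hmem
  have hconvex : Convex ℝ (T '' Metric.closedBall 0 1) :=
    (convex_closedBall 0 1).linear_image T.toLinearMap
  obtain ⟨ψ, u, hlt, hPF⟩ :=
    geometric_hahn_banach_closed_point hconvex.closure isClosed_closure hmem
  -- The separating functional pulls back to some `v ∈ V*`, and `F v ≤ ‖v‖` prevents separation.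
  obtain ⟨v, hv⟩ := hP ψ
  have hball : ∀ z : V, ‖z‖ ≤ 1 → v z < u := fun z hz => by
    rw [← NormedSpace.dual_def ℝ V z v, ← hv]
    exact hlt _ (subset_closure ⟨z, by simpa using hz, rfl⟩)
  have hu : 0 < u := by simpa using hball 0 (by simp)
  have hnorm : ‖v‖ ≤ u :=
    ContinuousLinearMap.opNorm_le_of_unit_norm hu.le fun z hz => by
      rw [Real.norm_eq_abs, abs_le']
      exact ⟨(hball z hz.le).le, by simpa using (hball (-z) (by simp [hz])).le⟩
  have hFv : F v ≤ ‖v‖ :=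
    calc F v ≤ ‖F v‖ := Real.le_norm_self _
      _ ≤ 1 * ‖v‖ := F.le_of_opNorm_le hF v
      _ = ‖v‖ := one_mul _
  rw [hv] at hPF
  linarith

lemma exists_seq_tendsto {P : StrongDual ℝ (StrongDual ℝ V) →L[ℝ] Y} (hP : IsWeakStarToWeak P)
    {F : StrongDual ℝ (StrongDual ℝ V)} (hF : ‖F‖ ≤ 1) (w : StrongDual ℝ V) :
    ∃ g : ℕ → V, (∀ n, ‖g n‖ ≤ 1) ∧
      Tendsto (fun n => P (NormedSpace.inclusionInDoubleDual ℝ V (g n))) atTop (𝓝 (P F)) ∧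
      Tendsto (fun n => w (g n)) atTop (𝓝 (F w)) := by
  obtain ⟨y, hy, hlim⟩ := mem_closure_iff_seq_limit.1
    ((hP.prod_eval w).mem_closure_image_closedBall hF)
  choose g hg hgy using hy
  obtain rfl : _ = y := funext hgy
  rw [nhds_prod_eq, tendsto_prod_iff'] at hlim
  exact ⟨g, fun n => by simpa using hg n, hlim⟩

end IsWeakStarToWeak

lemma exists_dual_eq_zero_of_notMem {R : Submodule ℝ V} (hR : IsClosed (R : Set V)) {v : V}
    (hv : v ∉ R) : ∃ F : StrongDual ℝ V, ‖F‖ ≤ 1 ∧ (∀ r ∈ R, F r = 0) ∧ 0 < F v := by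
  have : IsClosed (R : Set V) := hR
  have hquotient : R.mkQL v ≠ 0 := by rwa [Submodule.mkQL_apply, Submodule.mkQ_apply, Ne,
    Submodule.Quotient.mk_eq_zero]
  obtain ⟨G, hG, hGv⟩ := exists_dual_vector'' ℝ (R.mkQL v)
  refine ⟨G ∘L R.mkQL, ContinuousLinearMap.opNorm_le_bound _ zero_le_one fun u => ?_,
    fun r hr => ?_, ?_⟩
  · exact (G.le_of_opNorm_le hG _).trans (by gcongr; exact Submodule.Quotient.norm_mk_le R u)
  · rw [ContinuousLinearMap.comp_apply, Submodule.mkQL_apply, Submodule.mkQ_apply,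
      (Submodule.Quotient.mk_eq_zero R).2 hr, map_zero]
  · rw [ContinuousLinearMap.comp_apply, hGv]
    exact norm_pos_iff.2 hquotient

lemma mem_range_inclusionInDoubleDual_iff {w : StrongDual ℝ (StrongDual ℝ V)} :
    w ∈ (NormedSpace.inclusionInDoubleDual ℝ V).range ↔
      ∃ v : V, ∀ f : StrongDual ℝ V, w f = f v := by
  simp only [LinearMap.mem_range, ContinuousLinearMap.ext_iff, eq_comm (a := w _)]
  rfl

lemma isClosed_range_inclusionInDoubleDual [CompleteSpace V] :
    IsClosed
      ((NormedSpace.inclusionInDoubleDual ℝ V).range : Set (StrongDual ℝ (StrongDual ℝ V))) :=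
  (NormedSpace.inclusionInDoubleDualLi ℝ
    (E := V)).isometry.isUniformInducing.isComplete_range.isClosed

end WeakStarToWeak

section DensityOperator

variable {Ω : Type*} [MeasurableSpace Ω] {μ : Measure Ω} [IsFiniteMeasure μ]
  {V : Type*} [NormedAddCommGroup V] [NormedSpace ℝ V] {ν : VectorMeasure Ω V}

lemma l1_ext {g₁ g₂ : Lp ℝ 1 μ}
    (h : ∀ A (hA : MeasurableSet A),
      linftyPairing μ (indicatorConstLp ∞ hA (measure_ne_top μ A) 1) g₁ =
        linftyPairing μ (indicatorConstLp ∞ hA (measure_ne_top μ A) 1) g₂) : g₁ = g₂ := by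
  simp only [linftyPairing_indicatorConstLp] at h
  exact Lp.ext <| Integrable.ae_eq_of_forall_setIntegral_eq _ _ (L1.integrable_coeFn g₁)
    (L1.integrable_coeFn g₂) fun A hA _ => h A hA

lemma exists_l1_density (hν : ∀ A, μ A = 0 → ν A = 0) (F : StrongDual ℝ V) :
    ∃ d : Lp ℝ 1 μ, ∀ A (hA : MeasurableSet A),
      linftyPairing μ (indicatorConstLp ∞ hA (measure_ne_top μ A) 1) d = F (ν A) := by
  let m : SignedMeasure Ω := ν.mapRange F.toLinearMap.toAddMonoidHom F.continuous
  have hm : m ≪ᵥ μ.toENNRealVectorMeasure := .mk fun A hA hμA => by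
    rw [Measure.toENNRealVectorMeasure_apply_measurable hA] at hμA
    change F (ν A) = 0
    rw [hν A hμA, map_zero]
  have hint : Integrable (m.rnDeriv μ) μ := m.integrable_rnDeriv μ
  refine ⟨hint.toL1 _, fun A hA => ?_⟩
  calc linftyPairing μ (indicatorConstLp ∞ hA (measure_ne_top μ A) 1) (hint.toL1 _)
      = ∫ ω in A, m.rnDeriv μ ω ∂μ := by
        rw [linftyPairing_indicatorConstLp]
        exact integral_congr_ae (ae_restrict_of_ae hint.coeFn_toL1)
    _ = m A := by rw [← withDensityᵥ_apply hint hA, m.withDensityᵥ_rnDeriv_eq μ hm]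

lemma exists_l1_density_linearMap (hν : ∀ A, μ A = 0 → ν A = 0) :
    ∃ D : StrongDual ℝ V →ₗ[ℝ] Lp ℝ 1 μ, ∀ F A (hA : MeasurableSet A),
      linftyPairing μ (indicatorConstLp ∞ hA (measure_ne_top μ A) 1) (D F) = F (ν A) := by
  choose d hd using exists_l1_density (μ := μ) (ν := ν) hν
  refine ⟨{ toFun := d, map_add' := fun F G => l1_ext fun A hA => ?_,
            map_smul' := fun c F => l1_ext fun A hA => ?_ }, hd⟩
  · rw [map_add, hd, hd, hd, add_apply]
  · rw [map_smul, hd, hd, smul_apply, RingHom.id_apply]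

lemma exists_densityOperator (hν : ∀ A, μ A = 0 → ν A = 0) :
    ∃ S : StrongDual ℝ V →L[ℝ] Lp ℝ 1 μ, ∀ F A (hA : MeasurableSet A),
      linftyPairing μ (indicatorConstLp ∞ hA (measure_ne_top μ A) 1) (S F) = F (ν A) := by
  obtain ⟨D, hD⟩ := exists_l1_density_linearMap (μ := μ) hν
  refine ⟨⟨D, D.continuous_of_seq_closed_graph fun F F₀ g hF hg => l1_ext fun A hA => ?_⟩, hD⟩
  have heval : Tendsto (fun n => F n (ν A)) atTop (𝓝 (F₀ (ν A))) :=
    ((NormedSpace.inclusionInDoubleDual ℝ V (ν A)).continuous.tendsto F₀).comp hF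
  have hpair := ((linftyPairing μ
    (indicatorConstLp ∞ hA (measure_ne_top μ A) 1)).continuous.tendsto g).comp hg
  simp only [Function.comp_def, hD] at hpair
  rw [hD]
  exact tendsto_nhds_unique hpair heval

/-- The operator `V* → L¹(μ)` sending `F` to the Radon–Nikodym derivative of `F ∘ ν` with
respect to `μ`. -/
def densityOperator (hν : ∀ A, μ A = 0 → ν A = 0) : StrongDual ℝ V →L[ℝ] Lp ℝ 1 μ :=
  (exists_densityOperator hν).choose

lemma linftyPairing_indicatorConstLp_densityOperator (hν : ∀ A, μ A = 0 → ν A = 0)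
    (F : StrongDual ℝ V) {A : Set Ω} (hA : MeasurableSet A) :
    linftyPairing μ (indicatorConstLp ∞ hA (measure_ne_top μ A) 1) (densityOperator hν F) =
      F (ν A) :=
  (exists_densityOperator hν).choose_spec F A hA

lemma setIntegral_densityOperator (hν : ∀ A, μ A = 0 → ν A = 0) (F : StrongDual ℝ V) {A : Set Ω}
    (hA : MeasurableSet A) : ∫ ω in A, densityOperator hν F ω ∂μ = F (ν A) := by
  rw [← linftyPairing_indicatorConstLp hA, linftyPairing_indicatorConstLp_densityOperator]

lemma isWeakStarToWeak_densityOperator [CompleteSpace V] (hν : ∀ A, μ A = 0 → ν A = 0) :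
    IsWeakStarToWeak (densityOperator hν) := by
  let pullback : Lp ℝ ∞ μ →L[ℝ] StrongDual ℝ (StrongDual ℝ V) :=
    (ContinuousLinearMap.compL ℝ (StrongDual ℝ V) (Lp ℝ 1 μ) ℝ).flip (densityOperator hν) ∘L
      linftyPairing μ
  have hpullback : (NormedSpace.inclusionInDoubleDual ℝ V).range.comap pullback.toLinearMap = ⊤ :=
    linfty_submodule_eq_top (isClosed_range_inclusionInDoubleDual.preimage pullback.continuous)
      fun A hA => ⟨ν A, ContinuousLinearMap.ext fun F =>
        (linftyPairing_indicatorConstLp_densityOperator hν F hA).symm⟩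
  intro ψ
  obtain ⟨φ, rfl⟩ := linftyPairing_surjective ψ
  obtain ⟨v, hv⟩ : pullback φ ∈ (NormedSpace.inclusionInDoubleDual ℝ V).range :=
    Submodule.eq_top_iff'.1 hpullback φ
  exact ⟨v, fun F => (congrArg (fun G => G F) hv).symm⟩

end DensityOperator

namespace ConvexBlock

lemma le_of_mem_block {I : ℕ → Finset ℕ} (hI : ∀ k, ∀ n ∈ I k, ∀ m ∈ I (k + 1), n < m)
    (hne : ∀ k, (I k).Nonempty) {k n : ℕ} (hn : n ∈ I k) : k ≤ n := by
  induction k generalizing n with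
  | zero => exact n.zero_le
  | succ k ih =>
    obtain ⟨m, hm⟩ := hne k
    exact Nat.succ_le_of_lt ((ih hm).trans_lt (hI k m hm n hn))

lemma map {E E' : Type*} [AddCommMonoid E] [Module ℝ E] [AddCommMonoid E'] [Module ℝ E']
    {g h : ℕ → E} (hgh : ConvexBlock g h) (T : E →ₗ[ℝ] E') :
    ConvexBlock (fun n => T (g n)) fun k => T (h k) := by
  obtain ⟨I, a, hI, ha, hsum, hh⟩ := hgh
  exact ⟨I, a, hI, ha, hsum, fun k => by simp only [hh, map_sum, map_smul]⟩

lemma tendsto {E : Type*} [AddCommGroup E] [Module ℝ E] [TopologicalSpace E]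
    [LocallyConvexSpace ℝ E] {g h : ℕ → E} (hgh : ConvexBlock g h) {y : E}
    (hg : Tendsto g atTop (𝓝 y)) : Tendsto h atTop (𝓝 y) := by
  obtain ⟨I, a, hI, ha, hsum, hh⟩ := hgh
  have hne : ∀ k, (I k).Nonempty := fun k =>
    Finset.nonempty_of_sum_ne_zero (f := a) (by rw [hsum k]; exact one_ne_zero)
  refine (LocallyConvexSpace.convex_basis (𝕜 := ℝ) y).tendsto_right_iff.2 fun U ⟨hU, hconvex⟩ => ?_
  obtain ⟨N, hN⟩ := eventually_atTop.1 (hg hU)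
  filter_upwards [eventually_ge_atTop N] with k hk
  rw [hh k]
  exact hconvex.sum_mem (fun n _ => ha n) (hsum k) fun n hn =>
    hN n (hk.trans (le_of_mem_block hI hne hn))

end ConvexBlock

section PredualBall

variable {Z : Type*} [NormedAddCommGroup Z] [NormedSpace ℝ Z]

lemma tendsto_sigmaTop_iff {R : Submodule ℝ (Z →L[ℝ] ℝ)} {ι : Type*} {l : Filter ι} {h : ι → Z}
    {f : Z} : Tendsto h l (@nhds _ (sigmaTop R) f) ↔
      ∀ v ∈ R, Tendsto (fun i => v (h i)) l (𝓝 (v f)) := by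
  rw [sigmaTop, nhds_induced, tendsto_comap_iff, tendsto_pi_nhds, Subtype.forall]
  rfl

/-- `(B_Z, σ(Z, R))` is convex block compact, for a subspace `R ⊆ Z*`: every sequence in the closed
unit ball of `Z` admits a `σ(Z, R)`-convergent convex block subsequence. -/
def BallConvexBlockCompact (R : Submodule ℝ (Z →L[ℝ] ℝ)) : Prop :=
  ∀ g : ℕ → Z, (∀ n, ‖g n‖ ≤ 1) →
    ∃ h : ℕ → Z, ConvexBlock g h ∧ ∃ f : Z, Tendsto h atTop (@nhds _ (sigmaTop R) f)

lemma sigmaTop_range_inclusionInDoubleDual :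
    sigmaTop (NormedSpace.inclusionInDoubleDual ℝ Z).range = wstarTop Z := by
  simp only [sigmaTop, wstarTop, Pi.topologicalSpace, induced_iInf, induced_compose]
  refine ((NormedSpace.inclusionInDoubleDual ℝ Z).toLinearMap.surjective_rangeRestrict.iInf_congr
    _ fun z => ?_).symm
  rfl

lemma ballConvexBlockCompact_range_inclusionInDoubleDual_iff :
    BallConvexBlockCompact (NormedSpace.inclusionInDoubleDual ℝ Z).range ↔
      DualBallConvexBlockCompact Z := by
  rw [BallConvexBlockCompact, sigmaTop_range_inclusionInDoubleDual]
  rfl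

end PredualBall

section PredualDensity

variable {Ω : Type*} [MeasurableSpace Ω] {μ : Measure Ω} [IsFiniteMeasure μ]
  {Z : Type*} [NormedAddCommGroup Z] [NormedSpace ℝ Z] {ν : VectorMeasure Ω (Z →L[ℝ] ℝ)}
  {R : Submodule ℝ (Z →L[ℝ] ℝ)} (hν : ∀ A, μ A = 0 → ν A = 0)

/-- The operator `Z → L¹(μ)` sending `z` to the Radon–Nikodym derivative of `A ↦ ν A z` with
respect to `μ`, for a measure `ν` with values in `Z*`. -/
def predualDensityOperator : Z →L[ℝ] Lp ℝ 1 μ :=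
  densityOperator hν ∘L NormedSpace.inclusionInDoubleDual ℝ Z

lemma setIntegral_predualDensityOperator (z : Z) {A : Set Ω}
    (hA : MeasurableSet A) : ∫ ω in A, predualDensityOperator hν z ω ∂μ = ν A z :=
  setIntegral_densityOperator hν _ hA

lemma le_apply_of_mem_avgRange {A : Set Ω} {z : Z} {c : ℝ}
    (hc : ∀ᵐ ω ∂μ, ω ∈ A → c ≤ predualDensityOperator hν z ω) {w : Z →L[ℝ] ℝ}
    (hw : w ∈ avgRange μ ν A) : c ≤ w z := by
  obtain ⟨B, hB, hBA, hμB, rfl⟩ := hw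
  have hpos : 0 < μ.real B := ENNReal.toReal_pos hμB.ne' (measure_ne_top μ B)
  have hle : μ.real B * c ≤ ν B z :=
    calc μ.real B * c = ∫ _ in B, c ∂μ := by rw [setIntegral_const, smul_eq_mul]
      _ ≤ ∫ ω in B, predualDensityOperator hν z ω ∂μ := by
        refine setIntegral_mono_on_ae (integrableOn_const (measure_ne_top μ B))
          (L1.integrable_coeFn _).integrableOn hB ?_
        filter_upwards [hc] with ω hω hωB using hω (hBA hωB)
      _ = ν B z := setIntegral_predualDensityOperator hν z hB
  change c ≤ (μ.real B)⁻¹ * ν B z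
  rwa [← div_eq_inv_mul, le_div_iff₀' hpos]

lemma le_apply_of_mem_closure_avgRange {A : Set Ω} {z : Z} {c : ℝ}
    (hc : ∀ᵐ ω ∂μ, ω ∈ A → c ≤ predualDensityOperator hν z ω) {w : Z →L[ℝ] ℝ}
    (hw : w ∈ @closure _ (wstarTop Z) (convexHull ℝ (avgRange μ ν A))) : c ≤ w z := by
  have hconvex : Convex ℝ {w : Z →L[ℝ] ℝ | c ≤ w z} :=
    convex_halfSpace_ge (NormedSpace.inclusionInDoubleDual ℝ Z z).toLinearMap.isLinear c
  have hclosed : @IsClosed _ (wstarTop Z) {w : Z →L[ℝ] ℝ | c ≤ w z} :=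
    isClosed_induced_iff.2 ⟨_, isClosed_le continuous_const (continuous_apply z), rfl⟩
  have hsubset : convexHull ℝ (avgRange μ ν A) ⊆ {w : Z →L[ℝ] ℝ | c ≤ w z} :=
    convexHull_min (fun _ => le_apply_of_mem_avgRange hν hc) hconvex
  let _ := wstarTop Z
  exact closure_minimal hsubset hclosed hw

lemma apply_le_of_mem_closure_avgRange {A : Set Ω} {z : Z} {c : ℝ}
    (hc : ∀ᵐ ω ∂μ, ω ∈ A → predualDensityOperator hν z ω ≤ c) {w : Z →L[ℝ] ℝ}
    (hw : w ∈ @closure _ (wstarTop Z) (convexHull ℝ (avgRange μ ν A))) : w z ≤ c := by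
  refine neg_le_neg_iff.1 ((le_apply_of_mem_closure_avgRange (z := -z) hν ?_ hw).trans_eq
    (map_neg w z))
  rw [map_neg]
  filter_upwards [hc, Lp.coeFn_neg (predualDensityOperator hν z)] with ω hω hneg hA
  rw [hneg, Pi.neg_apply]
  exact neg_le_neg (hω hA)

lemma measure_predualDensityOperator_gap_eq_zero (hG : CondG μ ν R)
    {b : ℕ → Z} {f : Z} (hb : ∀ v ∈ R, Tendsto (fun k => v (b k)) atTop (𝓝 (v f)))
    {p q : ℝ} (hpq : p < q) :
    μ {ω | predualDensityOperator hν f ω ≤ p ∧ ∀ k, q ≤ predualDensityOperator hν (b k) ω} = 0 := by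
  have hmeas : ∀ z, Measurable (predualDensityOperator hν z) := fun z =>
    (Lp.stronglyMeasurable _).measurable
  set D := {ω | predualDensityOperator hν f ω ≤ p ∧ ∀ k, q ≤ predualDensityOperator hν (b k) ω}
  have hD : MeasurableSet D := by
    simp only [D, ofPred_and, ofPred_forall]
    exact (measurableSet_le (hmeas f) measurable_const).inter
      (.iInter fun k => measurableSet_le measurable_const (hmeas (b k)))
  by_contra hpos
  obtain ⟨v, hv, hvR⟩ := hG D hD (pos_iff_ne_zero.2 hpos)
  have hvf : v f ≤ p := apply_le_of_mem_closure_avgRange hν (.of_forall fun ω hω => hω.1) hv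
  have hvb : ∀ k, q ≤ v (b k) := fun k =>
    le_apply_of_mem_closure_avgRange hν (.of_forall fun ω hω => hω.2 k) hv
  exact hpq.not_ge ((ge_of_tendsto' (hb v hvR) hvb).trans hvf)

lemma ae_le_predualDensityOperator_of_ae_tendsto (hG : CondG μ ν R)
    {b : ℕ → Z} {f : Z} (hb : ∀ v ∈ R, Tendsto (fun k => v (b k)) atTop (𝓝 (v f))) {h : Ω → ℝ}
    (hlim : ∀ᵐ ω ∂μ, Tendsto (fun k => predualDensityOperator hν (b k) ω) atTop (𝓝 (h ω))) :
    h ≤ᵐ[μ] predualDensityOperator hν f := by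
  have hgap : ∀ᵐ ω ∂μ, ∀ (N : ℕ) (p q : ℚ), p < q →
      ¬(predualDensityOperator hν f ω ≤ p ∧ ∀ k, q ≤ predualDensityOperator hν (b (k + N)) ω) := by
    simp only [ae_all_iff]
    intro N p q hpq
    exact measure_eq_zero_iff_ae_notMem.1 (measure_predualDensityOperator_gap_eq_zero hν hG
      (fun v hv => (hb v hv).comp (tendsto_add_atTop_nat N)) (Rat.cast_lt.2 hpq))
  filter_upwards [hgap, hlim] with ω hgapω hlimω
  by_contra! hlt
  obtain ⟨p, hfp, hph⟩ := exists_rat_btwn hlt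
  obtain ⟨q, hpq, hqh⟩ := exists_rat_btwn hph
  obtain ⟨N, hN⟩ := eventually_atTop.1 (hlimω.eventually_const_lt hqh)
  exact hgapω N p q (Rat.cast_lt.1 hpq) ⟨hfp.le, fun k => (hN _ (Nat.le_add_left N k)).le⟩

lemma ae_le_predualDensityOperator_of_tendsto (hG : CondG μ ν R)
    {b : ℕ → Z} {f : Z} (hb : ∀ v ∈ R, Tendsto (fun k => v (b k)) atTop (𝓝 (v f)))
    {h : Lp ℝ 1 μ} (hlim : Tendsto (fun k => predualDensityOperator hν (b k)) atTop (𝓝 h)) :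
    h ≤ᵐ[μ] predualDensityOperator hν f := by
  obtain ⟨n, hn, hae⟩ := (tendstoInMeasure_of_tendsto_Lp hlim).exists_seq_tendsto_ae
  exact ae_le_predualDensityOperator_of_ae_tendsto hν hG
    (fun v hv => (hb v hv).comp hn.tendsto_atTop) hae

lemma exists_ae_le_predualDensityOperator (hG : CondG μ ν R)
    (hR : BallConvexBlockCompact R) {F : StrongDual ℝ (Z →L[ℝ] ℝ)} (hF : ‖F‖ ≤ 1)
    {w : Z →L[ℝ] ℝ} (hw : w ∈ R) :
    ∃ f : Z, w f = F w ∧ densityOperator hν F ≤ᵐ[μ] predualDensityOperator hν f := by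
  obtain ⟨g, hg, hgF, hgw⟩ := (isWeakStarToWeak_densityOperator hν).exists_seq_tendsto hF w
  obtain ⟨b, hblock, f, hbf⟩ := hR g hg
  rw [tendsto_sigmaTop_iff] at hbf
  refine ⟨f, tendsto_nhds_unique (hbf w hw) ((hblock.map w.toLinearMap).tendsto hgw), ?_⟩
  exact ae_le_predualDensityOperator_of_tendsto hν hG hbf
    ((hblock.map (predualDensityOperator hν).toLinearMap).tendsto hgF)

lemma densityOperator_ae_nonpos (hG : CondG μ ν R)
    (hR : BallConvexBlockCompact R) {F : StrongDual ℝ (Z →L[ℝ] ℝ)} (hF : ‖F‖ ≤ 1)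
    (hFR : ∀ w ∈ R, F w = 0) : densityOperator hν F ≤ᵐ[μ] 0 := by
  have hlevel : ∀ c : ℚ, 0 < c → μ {ω | c < densityOperator hν F ω} = 0 := fun c hc => by
    by_contra hpos
    obtain ⟨w, hw, hwR⟩ := hG _
      (measurableSet_lt measurable_const (Lp.stronglyMeasurable _).measurable)
      (pos_iff_ne_zero.2 hpos)
    obtain ⟨f, hwf, hle⟩ := exists_ae_le_predualDensityOperator hν hG hR hF hwR
    have hcw : c ≤ w f := le_apply_of_mem_closure_avgRange hν
      (by filter_upwards [hle] with ω hω hc using (le_of_lt hc).trans hω) hw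
    rw [hwf, hFR w hwR] at hcw
    exact hcw.not_gt (Rat.cast_pos.2 hc)
  have hae : ∀ᵐ ω ∂μ, ∀ c : ℚ, 0 < c → ¬(c < densityOperator hν F ω) := by
    simp only [ae_all_iff]
    exact fun c hc => measure_eq_zero_iff_ae_notMem.1 (hlevel c hc)
  filter_upwards [hae] with ω hω
  by_contra! hlt
  obtain ⟨c, hc, hcω⟩ := exists_rat_btwn hlt
  exact hω c (Rat.cast_pos.1 hc) hcω

end PredualDensity

theorem range_subset_of_convexBlockCompact_of_condG_bidual_general
    {Ω : Type*} [MeasurableSpace Ω] (μ : Measure Ω) [IsFiniteMeasure μ]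
    {Z : Type*} [NormedAddCommGroup Z] [NormedSpace ℝ Z]
    {R : Submodule ℝ (Z →L[ℝ] ℝ)} (hclosed : IsClosed (R : Set (Z →L[ℝ] ℝ)))
    (hR : BallConvexBlockCompact R) (ν : VectorMeasure Ω (Z →L[ℝ] ℝ))
    (hν : ∀ A : Set Ω, μ A = 0 → ν A = 0) (hG : CondG μ ν R) :
    ∀ A : Set Ω, MeasurableSet A → ν A ∈ R := by
  intro A hA
  by_contra hmem
  obtain ⟨F, hF, hFR, hpos⟩ := exists_dual_eq_zero_of_notMem hclosed hmem
  refine hpos.not_ge ?_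
  calc F (ν A) = ∫ ω in A, densityOperator hν F ω ∂μ := (setIntegral_densityOperator hν F hA).symm
    _ ≤ 0 := setIntegral_nonpos_of_ae (densityOperator_ae_nonpos hν hG hR hF hFR)

/-- Corollary: if `(B_{X*}, w*)` is convex block compact and `ν ∈ ca(μ, X**)` satisfies
condition (G) (with respect to `X`, viewed inside `X**` via the canonical embedding),
then `ν(Σ) ⊆ X`. -/
theorem range_subset_of_convexBlockCompact_of_condG_bidual
    {Ω : Type*} [MeasurableSpace Ω] (μ : Measure Ω) [IsFiniteMeasure μ]
    {X : Type*} [NormedAddCommGroup X] [NormedSpace ℝ X] [CompleteSpace X]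
    (hCBC : DualBallConvexBlockCompact X)
    (ν : VectorMeasure Ω ((X →L[ℝ] ℝ) →L[ℝ] ℝ))
    (hν : ∀ A : Set Ω, μ A = 0 → ν A = 0)
    (hG : ∀ A : Set Ω, MeasurableSet A → 0 < μ A →
      (@closure _ (wstarTop (X →L[ℝ] ℝ)) (convexHull ℝ (avgRange μ ν A)) ∩
        {w : (X →L[ℝ] ℝ) →L[ℝ] ℝ | ∃ x : X, ∀ f : X →L[ℝ] ℝ, w f = f x}).Nonempty) :
    ∀ A : Set Ω, MeasurableSet A → ∃ x : X, ∀ f : X →L[ℝ] ℝ, ν A f = f x := by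
  have hCondG : CondG μ ν (NormedSpace.inclusionInDoubleDual ℝ X).range := by
    simpa only [CondG, Set.Nonempty, mem_inter_iff, SetLike.mem_coe, mem_ofPred_eq,
      mem_range_inclusionInDoubleDual_iff] using hG
  exact fun A hA => mem_range_inclusionInDoubleDual_iff.1 <|
    range_subset_of_convexBlockCompact_of_condG_bidual_general μ
      isClosed_range_inclusionInDoubleDual
      (ballConvexBlockCompact_range_inclusionInDoubleDual_iff.2 hCBC) ν hν hCondG A hA
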